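/- Let φ : S → R be a local homomorphism of Noetherian local rings, where S and R are regular local rings with maximal ideals 𝔫 and 𝔪 respectively. If dim(R) = dim(S) + dim(R/𝔫R), where dim denotes Krull dimension and 𝔫R is the ideal of R generated by the image of 𝔫, then R is flat as an S-module. -/

import Mathlib

/-- A Noetherian local ring is regular if its maximal ideal is generated by
`dim R` elements (Krull dimension). -/
def IsRegularLocal (R : Type*) [CommRing R] [IsLocalRing R] : Prop :=
  ∃ s : Finset R, Ideal.span (s : Set R) = IsLocalRing.maximalIdeal R ∧
    (s.card : WithBot (WithTop ℕ)) = ringKrullDim R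

/-!
A regular local ring is Cohen–Macaulay, and on a Cohen–Macaulay `R`-module `M` elements of `𝔪` that
cut the dimension by their number form a regular sequence. By the dimension formula this applies to
the images of `dim S` generators of `𝔫`. A regular sequence generating `𝔫` makes `M ⊗ 𝔫 → M`
injective, that is, `Tor₁(M, S/𝔫) = 0`. If `M ⊗ I → M` fails to be injective for some ideal, take a
maximal such `I` and `x ∈ 𝔫 \ I`. Comparing `I` with the larger ideals `I + (x)` and `(I : x)` shows
that `(I : x) = I` and that the kernel is `x` times itself, so it vanishes by Nakayama's lemma.
-/

universe u v

namespace MiracleFlatness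

open IsLocalRing TensorProduct RingTheory.Sequence
open scoped Pointwise

section Tensor

variable {S : Type*} [CommRing S]

/-- Multiplication by `x`, as a map from `(I : x)` to `I`. It relates the failure of `M ⊗ I → M` to
be injective to that of `M ⊗ (I : x) → M`. -/
def colonMul (I : Ideal S) (x : S) : I.colon {x} →ₗ[S] I :=
  (LinearMap.mulLeft S x).restrict fun c hc => by
    simpa [mul_comm] using Submodule.mem_colon_singleton.mp hc

/-- The map `I × S → I + (x)` sending `(i, s)` to `i + s * x`, whose kernel is the image of
`(I : x)` under `c ↦ (c * x, -c)`. -/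
def prodToSup (I : Ideal S) (x : S) : I × S →ₗ[S] ↥(I ⊔ Ideal.span {x}) :=
  (Submodule.inclusion le_sup_left).coprod
    (LinearMap.toSpanSingleton S _ ⟨x, Ideal.mem_sup_right (Ideal.mem_span_singleton_self x)⟩)

lemma prodToSup_surjective (I : Ideal S) (x : S) : Function.Surjective (prodToSup I x) := by
  rintro ⟨a, ha⟩
  obtain ⟨b, i, hi, rfl⟩ := Ideal.mem_span_singleton_sup.mp (sup_comm I _ ▸ ha)
  exact ⟨(⟨i, hi⟩, b), Subtype.ext (by simp [prodToSup, add_comm])⟩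

lemma exact_colonMul_prod_neg_subtype_prodToSup (I : Ideal S) (x : S) :
    Function.Exact ((colonMul I x).prod (-Submodule.subtype _)) (prodToSup I x) := by
  rintro ⟨⟨i, hi⟩, s⟩
  constructor
  · intro h
    have hsum : i + s * x = 0 := by simpa [prodToSup] using congrArg Subtype.val h
    have hs : -s ∈ I.colon {x} := by
      rwa [Submodule.mem_colon_singleton, smul_eq_mul, neg_mul, ← eq_neg_of_add_eq_zero_left hsum]
    refine ⟨⟨-s, hs⟩, Prod.ext (Subtype.ext ?_) (by simp)⟩
    change x * -s = i
    linear_combination -hsum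
  · rintro ⟨c, hc⟩
    rw [← hc]
    refine Subtype.ext ?_
    simp [prodToSup, colonMul, mul_comm]

variable {M : Type*} [AddCommGroup M] [Module S M]

lemma exists_lTensor_colonMul_eq {I : Ideal S} {x : S}
    (hsup : Function.Injective ((I ⊔ Ideal.span {x}).subtype.lTensor M)) {z : M ⊗[S] I}
    (hz : I.subtype.lTensor M z = 0) :
    ∃ w : M ⊗[S] I.colon {x},
      (I.colon {x}).subtype.lTensor M w = 0 ∧ (colonMul I x).lTensor M w = z := by
  have hz0 : (prodToSup I x).lTensor M ((LinearMap.inl S I S).lTensor M z) = 0 := by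
    refine hsup ?_
    rw [map_zero, ← LinearMap.lTensor_comp_apply, ← LinearMap.lTensor_comp_apply, ← hz]
    congr 2
    ext i
    simp [prodToSup]
  obtain ⟨w, hw⟩ := (lTensor_exact M (exact_colonMul_prod_neg_subtype_prodToSup I x)
    (prodToSup_surjective I x) _).mp hz0
  refine ⟨w, ?_, ?_⟩
  · have hsnd := congrArg ((LinearMap.snd S I S).lTensor M) hw
    rw [← LinearMap.lTensor_comp_apply, ← LinearMap.lTensor_comp_apply, LinearMap.snd_comp_inl,
      LinearMap.lTensor_zero, LinearMap.snd_prod, LinearMap.lTensor_neg] at hsnd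
    simpa using hsnd
  · have hfst := congrArg ((LinearMap.fst S I S).lTensor M) hw
    rwa [← LinearMap.lTensor_comp_apply, ← LinearMap.lTensor_comp_apply, LinearMap.fst_comp_inl,
      LinearMap.lTensor_id, LinearMap.fst_prod] at hfst

lemma rid_lTensor_subtype_mem {J : Ideal S} (y : M ⊗[S] J) :
    TensorProduct.rid S M (J.subtype.lTensor M y) ∈ (J • ⊤ : Submodule S M) := by
  induction y with
  | zero => simp
  | add y z hy hz => simpa using add_mem hy hz
  | tmul m a => simpa using Submodule.smul_mem_smul a.2 Submodule.mem_top

lemma exists_lTensor_inclusion_eq_tmul {J K : Ideal S} (hJK : J ≤ K) {m : M}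
    (hm : m ∈ (J • ⊤ : Submodule S M)) (e : K) :
    ∃ y : M ⊗[S] J, (Submodule.inclusion hJK).lTensor M y = m ⊗ₜ e := by
  refine Submodule.smul_induction_on hm (fun a ha n _ => ?_) ?_
  · refine ⟨n ⊗ₜ ⟨a * e, J.mul_mem_right _ ha⟩, ?_⟩
    rw [LinearMap.lTensor_tmul, smul_tmul]
    rfl
  · rintro m n ⟨y, hy⟩ ⟨z, hz⟩
    exact ⟨y + z, by rw [map_add, hy, hz, add_tmul]⟩

lemma exists_eq_lTensor_inclusion_add_tmul {J : Ideal S} {x : S}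
    (z : M ⊗[S] ↥(J ⊔ Ideal.span {x})) :
    ∃ (y : M ⊗[S] J) (m : M), z = (Submodule.inclusion le_sup_left).lTensor M y +
      m ⊗ₜ ⟨x, Ideal.mem_sup_right (Ideal.mem_span_singleton_self x)⟩ := by
  induction z with
  | zero => exact ⟨0, 0, by simp⟩
  | add z w hz hw =>
    obtain ⟨y, m, rfl⟩ := hz
    obtain ⟨y', m', rfl⟩ := hw
    exact ⟨y + y', m + m', by rw [map_add, add_tmul]; abel⟩
  | tmul m a =>
    obtain ⟨⟨i, s⟩, rfl⟩ := prodToSup_surjective J x a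
    refine ⟨m ⊗ₜ i, s • m, ?_⟩
    rw [LinearMap.lTensor_tmul, smul_tmul, ← tmul_add]
    rfl

lemma lTensor_sup_span_singleton_injective {J : Ideal S} {x : S}
    (hJ : Function.Injective (J.subtype.lTensor M))
    (hx : IsSMulRegular (M ⧸ (J • ⊤ : Submodule S M)) x) :
    Function.Injective ((J ⊔ Ideal.span {x}).subtype.lTensor M) := by
  have hincl (y : M ⊗[S] J) : (J ⊔ Ideal.span {x}).subtype.lTensor M
      ((Submodule.inclusion le_sup_left).lTensor M y) = J.subtype.lTensor M y := by
    rw [← LinearMap.lTensor_comp_apply, Submodule.subtype_comp_inclusion]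
  refine (injective_iff_map_eq_zero _).mpr fun z hz => ?_
  obtain ⟨y, m, rfl⟩ := exists_eq_lTensor_inclusion_add_tmul z
  have hm : m ∈ (J • ⊤ : Submodule S M) := by
    refine mem_of_isSMulRegular_quotient_of_smul_mem hx ?_
    have hsum : TensorProduct.rid S M (J.subtype.lTensor M y) + x • m = 0 := by
      simpa [hincl] using congrArg (TensorProduct.rid S M) hz
    rw [eq_neg_of_add_eq_zero_right hsum]
    exact neg_mem (rid_lTensor_subtype_mem y)
  obtain ⟨y', hy'⟩ := exists_lTensor_inclusion_eq_tmul le_sup_left hm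
    ⟨x, Ideal.mem_sup_right (Ideal.mem_span_singleton_self x)⟩
  rw [← hy', ← map_add] at hz ⊢
  rw [hincl] at hz
  rw [(injective_iff_map_eq_zero _).mp hJ _ hz, map_zero]

theorem lTensor_ofList_injective_of_isWeaklyRegular {xs : List S} (h : IsWeaklyRegular M xs) :
    Function.Injective ((Ideal.ofList xs).subtype.lTensor M) := by
  induction xs using List.reverseRecOn with
  | nil =>
    rw [Ideal.ofList_nil]
    exact Function.injective_of_subsingleton _
  | append_singleton xs x ih =>
    obtain ⟨hxs, hx⟩ := (isWeaklyRegular_append_iff M xs [x]).mp h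
    rw [Ideal.ofList_append, Ideal.ofList_singleton]
    exact lTensor_sup_span_singleton_injective (ih hxs)
      ((isWeaklyRegular_singleton_iff _ x).mp hx)

end Tensor

section LocalCriterion

variable {S M : Type*} [CommRing S] [IsLocalRing S] [IsNoetherianRing S] [AddCommGroup M]
  [Module S M]

lemma lTensor_subtype_injective_of_colon_le (R : Type*) [CommRing R] [IsLocalRing R]
    [IsNoetherianRing R] [Algebra S R] [IsLocalHom (algebraMap S R)] [Module R M]
    [IsScalarTower S R M] [Module.Finite R M]
    {I : Ideal S} {x : S} (hx : x ∈ maximalIdeal S)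
    (hcolon : I.colon {x} ≤ I)
    (hsup : Function.Injective ((I ⊔ Ideal.span {x}).subtype.lTensor M)) :
    Function.Injective (I.subtype.lTensor M) := by
  suffices hker : LinearMap.ker (AlgebraTensorModule.lTensor R M I.subtype) ≤ ⊥ from
    LinearMap.ker_eq_bot.mp (le_bot_iff.mp hker)
  have : Module.Finite R (M ⊗[S] I) :=
    Module.Finite.equiv (AlgebraTensorModule.cancelBaseChange S R R M I)
  have : IsNoetherian R (M ⊗[S] I) := isNoetherian_of_isNoetherianRing_of_finite R _
  refine Submodule.le_of_le_smul_of_le_jacobson_bot (IsNoetherian.noetherian _)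
    (maximalIdeal_le_jacobson ⊥) fun z hz => Submodule.mem_sup_right ?_
  obtain ⟨w, hw, rfl⟩ := exists_lTensor_colonMul_eq hsup hz
  have hmul : colonMul I x = x • Submodule.inclusion hcolon := rfl
  rw [hmul, LinearMap.lTensor_smul, LinearMap.smul_apply, ← algebraMap_smul R x]
  refine Submodule.smul_mem_smul (map_nonunit (algebraMap S R) x hx) ?_
  change I.subtype.lTensor M ((Submodule.inclusion hcolon).lTensor M w) = 0
  rw [← LinearMap.lTensor_comp_apply, Submodule.subtype_comp_inclusion, hw]

theorem flat_of_lTensor_maximalIdeal_injective (R : Type*) [CommRing R] [IsLocalRing R]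
    [IsNoetherianRing R] [Algebra S R] [IsLocalHom (algebraMap S R)] [Module R M]
    [IsScalarTower S R M] [Module.Finite R M]
    (h : Function.Injective ((maximalIdeal S).subtype.lTensor M)) : Module.Flat S M := by
  refine Module.Flat.iff_lTensor_injective'.mpr fun I => ?_
  induction I using WellFoundedGT.induction with
  | ind I ih =>
    obtain rfl | hI := eq_or_ne I ⊤
    · exact (LinearEquiv.lTensor M Submodule.topEquiv).injective
    obtain rfl | hlt := (le_maximalIdeal hI).eq_or_lt
    · exact h
    obtain ⟨x, hx, hxI⟩ := SetLike.exists_of_lt hlt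
    have hsup := ih _ (Submodule.lt_sup_iff_notMem.mpr hxI)
    by_cases hcolon : I.colon {x} ≤ I
    · exact lTensor_subtype_injective_of_colon_le R hx hcolon hsup
    have hle : I ≤ I.colon {x} := fun a ha =>
      Submodule.mem_colon_singleton.mpr (I.mul_mem_right x ha)
    refine (injective_iff_map_eq_zero _).mpr fun z hz => ?_
    obtain ⟨w, hw, rfl⟩ := exists_lTensor_colonMul_eq hsup hz
    rw [(injective_iff_map_eq_zero _).mp (ih _ (hle.lt_of_not_ge hcolon)) w hw, map_zero]

end LocalCriterion

section Dimension

variable {R : Type*} [CommRing R]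

lemma ringKrullDim_quotient_add_one_le_of_lt {p J : Ideal R} [p.IsPrime] (h : p < J) :
    ringKrullDim (R ⧸ J) + 1 ≤ ringKrullDim (R ⧸ p) := by
  obtain ⟨x, hxJ, hxp⟩ := SetLike.exists_of_lt h
  refine ringKrullDim_succ_le_of_surjective _ (Ideal.Quotient.factor_surjective h.le)
    (r := Ideal.Quotient.mk p x) (mem_nonZeroDivisors_of_ne_zero ?_) ?_
  · rwa [ne_eq, Ideal.Quotient.eq_zero_iff_mem]
  · rwa [Ideal.Quotient.factor_mk, Ideal.Quotient.eq_zero_iff_mem]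

variable {M : Type*} [AddCommGroup M] [Module R M] [Module.Finite R M]

lemma ringKrullDim_quotient_le_supportDim {p : Ideal R} (h : Module.annihilator R M ≤ p) :
    ringKrullDim (R ⧸ p) ≤ Module.supportDim R M := by
  rw [Module.supportDim_eq_ringKrullDim_quotient_annihilator]
  exact ringKrullDim_le_of_surjective _ (Ideal.Quotient.factor_surjective h)

lemma annihilator_quotSMulTop_le {p : Ideal R} [p.IsPrime] {x : R}
    (hp : Module.annihilator R M ≤ p) (hx : x ∈ p) :
    Module.annihilator R (QuotSMulTop x M) ≤ p := by
  have hmem : (⟨p, inferInstance⟩ : PrimeSpectrum R) ∈ Module.support R (QuotSMulTop x M) := by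
    rw [Module.support_quotSMulTop]
    exact ⟨Module.mem_support_iff_of_finite.mpr hp, by simpa using hx⟩
  exact Module.mem_support_iff_of_finite.mp hmem

variable [IsLocalRing R] [IsNoetherianRing R]

lemma supportDim_le_supportDim_quotient_ofList_add_length {xs : List R}
    (hxs : ∀ x ∈ xs, x ∈ maximalIdeal R) :
    Module.supportDim R M ≤
      Module.supportDim R (M ⧸ (Ideal.ofList xs • ⊤ : Submodule R M)) + xs.length := by
  induction xs generalizing M with
  | nil =>
    rw [Ideal.ofList_nil, Submodule.bot_smul]
    simpa using (Module.supportDim_eq_of_equiv (Submodule.quotEquivOfEqBot (M := M) ⊥ rfl)).ge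
  | cons x xs ih =>
    obtain ⟨hx, hxs⟩ := List.forall_mem_cons.mp hxs
    rw [Module.supportDim_eq_of_equiv
      (Submodule.quotOfListConsSMulTopEquivQuotSMulTopInner M x xs), List.length_cons,
      Nat.cast_succ, ← add_assoc]
    exact (Module.supportDim_le_supportDim_quotSMulTop_succ hx).trans
      (add_le_add_left (ih hxs) 1)

end Dimension

section CohenMacaulay

open CategoryTheory Abelian

/-- A nonzero module `M` over a Noetherian local ring `R` is Cohen–Macaulay if its depth equals its
dimension, that is, if some regular sequence on `M` has length `dim M`. -/
def IsCohenMacaulay (R : Type u) [CommRing R] (M : Type v) [AddCommGroup M] [Module R M] : Prop :=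
  ∃ rs : List R, IsRegular M rs ∧ (rs.length : WithBot ℕ∞) = Module.supportDim R M

variable {R : Type u} [CommRing R] {M : Type v} [AddCommGroup M] [Module R M]

lemma subsingleton_ext_quotSMulTop [Small.{v} R] {L N : ModuleCat.{v} R} {x : R}
    (hx : IsSMulRegular N x) {i : ℕ} (h : Subsingleton (Ext L N i))
    (hsucc : Subsingleton (Ext L N (i + 1))) :
    Subsingleton (Ext L (ModuleCat.of R (QuotSMulTop x N)) i) := by
  have hzero := AddCommGrpCat.isZero_of_iff_subsingleton.mpr h
  have hzero_succ := AddCommGrpCat.isZero_of_iff_subsingleton.mpr hsucc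
  exact AddCommGrpCat.subsingleton_of_isZero <| ShortComplex.Exact.isZero_of_both_zeros
    (Ext.covariant_sequence_exact₃' L hx.smulShortComplex_shortExact i (i + 1) rfl)
    (hzero.eq_zero_of_src _) (hzero_succ.eq_zero_of_tgt _)

variable [IsLocalRing R]

lemma mem_maximalIdeal_of_isRegular {rs : List R} (h : IsRegular M rs) {r : R} (hr : r ∈ rs) :
    r ∈ maximalIdeal R := by
  have hne : Ideal.ofList rs ≠ ⊤ := fun htop => h.top_ne_smul (by rw [htop, Submodule.top_smul])
  exact le_maximalIdeal hne (Ideal.subset_span hr)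

variable [IsNoetherianRing R] [Module.Finite R M]

lemma eq_bot_of_le_smul_top {N : Submodule R M} {x : R} (hx : x ∈ maximalIdeal R)
    (hreg : IsSMulRegular (M ⧸ N) x) (hN : N ≤ x • (⊤ : Submodule R M)) : N = ⊥ := by
  refine Submodule.eq_bot_of_le_smul_of_le_jacobson_bot _ N (IsNoetherian.noetherian _)
    (fun n hn => ?_) (maximalIdeal_le_jacobson ⊥)
  obtain ⟨m, -, rfl⟩ := hN hn
  exact Submodule.smul_mem_smul hx (mem_of_isSMulRegular_quotient_of_smul_mem hreg hn)

lemma exists_lt_mem_associatedPrimes_quotSMulTop {p : Ideal R} (hp : p ∈ associatedPrimes R M)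
    {x : R} (hx : x ∈ maximalIdeal R) (hreg : IsSMulRegular M x) :
    ∃ q ∈ associatedPrimes R (QuotSMulTop x M), p < q := by
  obtain ⟨hprime, u, hu⟩ := isAssociatedPrime_iff.mp hp
  have hxp : x ∉ p := fun hxp =>
    (biUnion_associatedPrimes_eq_compl_regular R M).subset (Set.mem_biUnion hp hxp) hreg
  let N : Submodule R M := Submodule.torsionBySet R M p
  have hNreg : IsSMulRegular (M ⧸ N) x := by
    refine (isSMulRegular_quotient_iff_mem_of_smul_mem N x).mpr fun m hm =>
      (Submodule.mem_torsionBySet_iff _ _).mpr fun a => hreg ?_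
    simpa [smul_comm x] using (Submodule.mem_torsionBySet_iff _ _).mp hm a
  have huN : u ∈ N := (Submodule.mem_torsionBySet_iff _ _).mpr fun ⟨a, ha⟩ => by
    simpa [hu, Submodule.mem_colon_singleton] using ha
  have hu0 : u ≠ 0 := by
    rintro rfl
    exact hprime.ne_top (by simp [hu])
  obtain ⟨v, hvN, hv⟩ : ∃ v ∈ N, v ∉ x • (⊤ : Submodule R M) :=
    SetLike.not_le_iff_exists.mp fun hle =>
      hu0 ((Submodule.eq_bot_iff N).mp (eq_bot_of_le_smul_top hx hNreg hle) u huN)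
  obtain ⟨q, hq, hvq⟩ := exists_le_isAssociatedPrime_of_isNoetherianRing R
    (Submodule.Quotient.mk v : QuotSMulTop x M) (by simpa [Submodule.Quotient.mk_eq_zero] using hv)
  have hmem {a : R} (ha : a • v ∈ x • (⊤ : Submodule R M)) : a ∈ q := hvq <| by
    rwa [Submodule.mem_colon_singleton, ← Submodule.Quotient.mk_smul, Submodule.mem_bot,
      Submodule.Quotient.mk_eq_zero]
  refine ⟨q, hq, SetLike.lt_iff_le_and_exists.mpr ⟨fun a ha => hmem ?_, x, hmem ?_, hxp⟩⟩
  · have hav : a • v = 0 := (Submodule.mem_torsionBySet_iff _ _).mp hvN ⟨a, ha⟩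
    rw [hav]
    exact zero_mem _
  · exact Submodule.smul_mem_pointwise_smul v x ⊤ Submodule.mem_top

theorem length_le_ringKrullDim_quotient_of_mem_associatedPrimes {rs : List R}
    (h : IsRegular M rs) {p : Ideal R} (hp : p ∈ associatedPrimes R M) :
    (rs.length : WithBot ℕ∞) ≤ ringKrullDim (R ⧸ p) := by
  have hprime := hp.isPrime
  induction rs generalizing M p with
  | nil => simpa using ringKrullDim_nonneg_of_nontrivial
  | cons x rs ih =>
    obtain ⟨hx, hrs⟩ := (isRegular_cons_iff M x rs).mp h
    obtain ⟨q, hq, hpq⟩ := exists_lt_mem_associatedPrimes_quotSMulTop hp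
      (mem_maximalIdeal_of_isRegular h List.mem_cons_self) hx
    rw [List.length_cons, Nat.cast_succ]
    exact (add_le_add_left (ih hrs hq hq.isPrime) 1).trans
      (ringKrullDim_quotient_add_one_le_of_lt hpq)

theorem IsCohenMacaulay.isSMulRegular_of_supportDim_quotSMulTop_add_one_le
    (hM : IsCohenMacaulay R M) {x : R}
    (hdim : Module.supportDim R (QuotSMulTop x M) + 1 ≤ Module.supportDim R M) :
    IsSMulRegular M x := by
  obtain ⟨rs, hrs, hlen⟩ := hM
  by_contra hx
  obtain ⟨p, hp, hxp⟩ := Set.mem_iUnion₂.mp <|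
    (biUnion_associatedPrimes_eq_compl_regular R M).superset hx
  have hprime := hp.isPrime
  have hann : Module.annihilator R M ≤ p :=
    Submodule.annihilator_top.symm.trans_le hp.annihilator_le
  have hle : (rs.length : WithBot ℕ∞) ≤ Module.supportDim R (QuotSMulTop x M) :=
    (length_le_ringKrullDim_quotient_of_mem_associatedPrimes hrs hp).trans
      (ringKrullDim_quotient_le_supportDim (annihilator_quotSMulTop_le hann hxp))
  have hlt := (add_le_add_left hle 1).trans (hdim.trans_eq hlen.symm)
  norm_cast at hlt
  omega

variable [Small.{v} R]

lemma exists_isRegular_iff_subsingleton_ext [Nontrivial M] {n : ℕ} :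
    (∃ rs : List R, rs.length = n ∧ IsRegular M rs) ↔ ∀ i < n, Subsingleton
      (Ext (ModuleCat.of R (Shrink.{v} (R ⧸ maximalIdeal R))) (ModuleCat.of R M) i) := by
  have hlt : maximalIdeal R • (⊤ : Submodule R M) < ⊤ :=
    (Submodule.top_ne_ideal_smul_of_le_jacobson_annihilator
      (maximalIdeal_le_jacobson _)).symm.lt_top
  have hrees := ModuleCat.exists_isRegular_tfae (maximalIdeal R) n (ModuleCat.of R M) hlt
  refine Iff.trans ?_ (hrees.out 3 1)
  exact exists_congr fun rs => and_congr_right fun _ =>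
    ⟨fun h => ⟨fun r hr => mem_maximalIdeal_of_isRegular h hr, h⟩, fun h => h.2⟩

theorem IsCohenMacaulay.quotSMulTop (hM : IsCohenMacaulay R M) {x : R} (hx : x ∈ maximalIdeal R)
    (hreg : IsSMulRegular M x) : IsCohenMacaulay R (QuotSMulTop x M) := by
  obtain ⟨rs, hrs, hlen⟩ := hM
  have := hrs.nontrivial
  have := nontrivial_quotSMulTop_of_mem_maximalIdeal M hx
  have hdim := Module.supportDim_quotSMulTop_succ_eq_supportDim hreg hx
  obtain ⟨n, hn⟩ : ∃ n, rs.length = n + 1 := by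
    refine Nat.exists_eq_succ_of_ne_zero fun h0 => ?_
    rw [← hlen, h0, Nat.cast_zero] at hdim
    exact Module.supportDim_ne_bot_of_nontrivial R (QuotSMulTop x M)
      ((ENat.WithBot.add_one_le_zero_iff _).mp hdim.le)
  have hext := exists_isRegular_iff_subsingleton_ext.mp ⟨rs, hn, hrs⟩
  obtain ⟨rs', hlen', hrs'⟩ : ∃ rs' : List R, rs'.length = n ∧ IsRegular (QuotSMulTop x M) rs' :=
    exists_isRegular_iff_subsingleton_ext.mpr fun i hi =>
      subsingleton_ext_quotSMulTop (N := .of R M) hreg (hext i (by omega)) (hext (i + 1) (by omega))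
  refine ⟨rs', hrs', ?_⟩
  rw [← hlen, hn, Nat.cast_succ] at hdim
  rw [hlen']
  exact (ENat.WithBot.add_one_cancel.mp hdim).symm

theorem IsCohenMacaulay.isWeaklyRegular_of_supportDim_add_length_le (hM : IsCohenMacaulay R M)
    {xs : List R} (hxs : ∀ x ∈ xs, x ∈ maximalIdeal R)
    (hdim : Module.supportDim R (M ⧸ (Ideal.ofList xs • ⊤ : Submodule R M)) + xs.length ≤
      Module.supportDim R M) : IsWeaklyRegular M xs := by
  induction xs generalizing M with
  | nil => exact .nil R M
  | cons x xs ih =>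
    obtain ⟨hx, hxs⟩ := List.forall_mem_cons.mp hxs
    rw [Module.supportDim_eq_of_equiv
      (Submodule.quotOfListConsSMulTopEquivQuotSMulTopInner M x xs), List.length_cons,
      Nat.cast_succ, ← add_assoc] at hdim
    have hreg : IsSMulRegular M x := hM.isSMulRegular_of_supportDim_quotSMulTop_add_one_le <|
      (add_le_add_left (supportDim_le_supportDim_quotient_ofList_add_length hxs) 1).trans hdim
    rw [← Module.supportDim_quotSMulTop_succ_eq_supportDim hreg hx] at hdim
    exact .cons hreg <| ih (hM.quotSMulTop hx hreg) hxs
      (ENat.WithBot.add_le_add_one_right_iff.mp hdim)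

end CohenMacaulay

section RegularLocalRing

lemma exists_isPrime_ringKrullDim_quotient_eq (R : Type*) [CommRing R] [FiniteRingKrullDim R] :
    ∃ q : Ideal R, q.IsPrime ∧ ringKrullDim (R ⧸ q) = ringKrullDim R := by
  let l := LTSeries.longestOf (PrimeSpectrum R)
  refine ⟨l.head.asIdeal, l.head.isPrime, (ringKrullDim_quotient_le _).antisymm ?_⟩
  rw [ringKrullDim_quotient, ringKrullDim, Order.krullDim_eq_length_of_finiteDimensionalOrder]
  exact Order.le_krullDim_iff.mpr
    ⟨⟨l.length, fun i => ⟨l i, l.head_le i⟩, fun i => l.step i⟩, rfl⟩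

variable {R : Type*} [CommRing R] [IsLocalRing R]

lemma isLocalRing_quotient_span_singleton {x : R} (hx : x ∈ maximalIdeal R) :
    IsLocalRing (R ⧸ Ideal.span {x}) := by
  have : Nontrivial (R ⧸ Ideal.span {x}) := Ideal.Quotient.nontrivial_iff.mpr <|
    ne_top_of_le_ne_top Ideal.IsPrime.ne_top' ((Ideal.span_singleton_le_iff_mem _).mpr hx)
  exact .of_surjective' _ Ideal.Quotient.mk_surjective

lemma ofList_map_mk_eq_maximalIdeal {x : R} {xs : List R} [IsLocalRing (R ⧸ Ideal.span {x})]
    (hxs : Ideal.ofList (x :: xs) = maximalIdeal R) :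
    Ideal.ofList (xs.map (Ideal.Quotient.mk (Ideal.span {x}))) =
      maximalIdeal (R ⧸ Ideal.span {x}) := by
  rw [← map_maximalIdeal_of_surjective _ Ideal.Quotient.mk_surjective, ← hxs, Ideal.ofList_cons,
    Ideal.map_sup, Ideal.map_quotient_self, bot_sup_eq, Ideal.map_ofList]

lemma _root_.IsRegularLocal.exists_ofList_eq_maximalIdeal (h : IsRegularLocal R) :
    ∃ xs : List R, Ideal.ofList xs = maximalIdeal R ∧
      (xs.length : WithBot ℕ∞) = ringKrullDim R := by
  obtain ⟨s, hs, hcard⟩ := h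
  refine ⟨s.toList, ?_, ?_⟩
  · simpa [Ideal.ofList] using hs
  · rw [Finset.length_toList]
    exact hcard

variable [IsNoetherianRing R]

lemma ringKrullDim_quotient_le_quotient_sup_span_singleton_add_one (I : Ideal R) {x : R}
    (hx : x ∈ maximalIdeal R) :
    ringKrullDim (R ⧸ I) ≤ ringKrullDim (R ⧸ I ⊔ Ideal.span {x}) + 1 := by
  rw [← Module.supportDim_quotient_eq_ringKrullDim I]
  refine (Module.supportDim_le_supportDim_quotSMulTop_succ hx).trans (add_le_add_left ?_ 1)
  rw [Module.supportDim_eq_ringKrullDim_quotient_annihilator]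
  refine ringKrullDim_le_of_surjective _ (Ideal.Quotient.factor_surjective (sup_le ?_ ?_))
  · exact Ideal.annihilator_quotient.symm.trans_le
      ((Submodule.mkQ (x • ⊤)).annihilator_le_of_surjective (Submodule.mkQ_surjective _))
  · rw [Ideal.span_singleton_le_iff_mem]
    exact Module.mem_annihilator.mpr (Module.isTorsionBy_quotient_element_smul _ x)

lemma ringKrullDim_le_length_of_ofList_eq_maximalIdeal {xs : List R}
    (hxs : Ideal.ofList xs = maximalIdeal R) : ringKrullDim R ≤ xs.length := by
  have h := supportDim_le_supportDim_quotient_ofList_add_length (M := R) (xs := xs)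
    fun x hx => hxs ▸ Ideal.subset_span hx
  rw [Module.supportDim_self_eq_ringKrullDim, hxs, Ideal.smul_eq_mul, Ideal.mul_top,
    Module.supportDim_quotient_eq_ringKrullDim] at h
  have hfield : IsField (R ⧸ maximalIdeal R) :=
    (Ideal.Quotient.maximal_ideal_iff_isField_quotient _).mp inferInstance
  rwa [ringKrullDim_eq_zero_of_isField hfield, zero_add] at h

lemma isDomain_of_isPrime_span_singleton {x : R} (hx : x ∈ maximalIdeal R)
    (hprime : (Ideal.span {x}).IsPrime)
    (hdim : ringKrullDim (R ⧸ Ideal.span {x}) < ringKrullDim R) : IsDomain R := by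
  obtain ⟨q, hq, hqdim⟩ := exists_isPrime_ringKrullDim_quotient_eq R
  have hxq : x ∉ q := fun hxq => hdim.not_ge <| hqdim.symm.trans_le <|
    ringKrullDim_le_of_surjective _
      (Ideal.Quotient.factor_surjective ((Ideal.span_singleton_le_iff_mem q).mpr hxq))
  have hqx : q ≤ Ideal.span {x} := by
    by_contra hqx
    exact hdim.not_ge <| hqdim.symm.trans_le <|
      (ringKrullDim_quotient_le_quotient_sup_span_singleton_add_one q hx).trans
        (ringKrullDim_quotient_add_one_le_of_lt (right_lt_sup.mpr hqx))
  have hreg : IsSMulRegular (R ⧸ q) x :=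
    (isSMulRegular_quotient_iff_mem_of_smul_mem q x).mpr fun a ha =>
      (hq.mem_or_mem ha).resolve_left hxq
  have hbot : q = ⊥ := eq_bot_of_le_smul_top hx hreg <| by
    rwa [← Submodule.ideal_span_singleton_smul, Ideal.smul_eq_mul, Ideal.mul_top]
  subst hbot
  exact .of_bot_isPrime R

lemma ringKrullDim_quotient_span_singleton_eq_length {x : R} {xs : List R}
    [IsLocalRing (R ⧸ Ideal.span {x})] (hxs : Ideal.ofList (x :: xs) = maximalIdeal R)
    (hdim : (x :: xs).length ≤ ringKrullDim R) :
    ringKrullDim (R ⧸ Ideal.span {x}) = xs.length := by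
  refine le_antisymm ?_ ?_
  · simpa using ringKrullDim_le_length_of_ofList_eq_maximalIdeal (ofList_map_mk_eq_maximalIdeal hxs)
  · have hx : x ∈ maximalIdeal R := hxs ▸ Ideal.subset_span List.mem_cons_self
    have h := ringKrullDim_le_ringKrullDim_quotient_add_card {x}
      (by simpa [ringJacobson_eq_maximalIdeal] using hx)
    rw [Finset.coe_singleton, Finset.card_singleton, Nat.cast_one] at h
    rw [List.length_cons, Nat.cast_succ] at hdim
    exact ENat.WithBot.add_le_add_one_right_iff.mp (hdim.trans h)

theorem isDomain_and_isWeaklyRegular_of_ofList_eq_maximalIdeal {xs : List R}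
    (hxs : Ideal.ofList xs = maximalIdeal R) (hdim : xs.length ≤ ringKrullDim R) :
    IsDomain R ∧ IsWeaklyRegular R xs := by
  induction hn : xs.length generalizing R with
  | zero =>
    obtain rfl := List.length_eq_zero_iff.mp hn
    rw [Ideal.ofList_nil, eq_comm, ← isField_iff_maximalIdeal_eq] at hxs
    exact ⟨hxs.isDomain, .nil R R⟩
  | succ n ih =>
    obtain ⟨x, xs, rfl⟩ := List.exists_cons_of_length_eq_add_one hn
    have hx : x ∈ maximalIdeal R := hxs ▸ Ideal.subset_span List.mem_cons_self
    have := isLocalRing_quotient_span_singleton hx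
    have hquot := ringKrullDim_quotient_span_singleton_eq_length hxs hdim
    have hlt : ringKrullDim (R ⧸ Ideal.span {x}) < ringKrullDim R := by
      refine hquot.trans_lt (lt_of_lt_of_le ?_ hdim)
      exact_mod_cast Nat.lt_succ_self xs.length
    obtain ⟨hdom, hreg⟩ := ih (ofList_map_mk_eq_maximalIdeal hxs)
      (by rw [List.length_map, hquot]) (by simpa using hn)
    have : IsDomain R := isDomain_of_isPrime_span_singleton hx
      ((Ideal.Quotient.isDomain_iff_prime _).mp hdom) hlt
    have hx0 : x ≠ 0 := by
      rintro rfl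
      rw [Set.singleton_zero, Ideal.span_zero] at hlt
      exact hlt.ne (ringKrullDim_eq_of_ringEquiv (RingEquiv.quotientBot R))
    refine ⟨this, .cons (.of_ne_zero hx0) ?_⟩
    rw [(Submodule.quotEquivOfEq (x • ⊤) (Ideal.span {x}) (by
      rw [← Submodule.ideal_span_singleton_smul, Ideal.smul_eq_mul,
        Ideal.mul_top])).isWeaklyRegular_congr]
    exact (isWeaklyRegular_map_algebraMap_iff (R ⧸ Ideal.span {x}) _ xs).mp hreg

theorem _root_.IsRegularLocal.isCohenMacaulay (h : IsRegularLocal R) : IsCohenMacaulay R R := by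
  obtain ⟨xs, hxs, hlen⟩ := h.exists_ofList_eq_maximalIdeal
  refine ⟨xs, .of_isWeaklyRegular_of_mem_maximalIdeal R (fun x hx => hxs ▸ Ideal.subset_span hx)
    (isDomain_and_isWeaklyRegular_of_ofList_eq_maximalIdeal hxs hlen.le).2, ?_⟩
  rw [hlen, Module.supportDim_self_eq_ringKrullDim]

end RegularLocalRing

end MiracleFlatness

theorem stmt_9_general {S : Type*} {R : Type u} {M : Type v} [CommRing S] [CommRing R]
    [IsNoetherianRing S] [IsNoetherianRing R] [IsLocalRing S] [IsLocalRing R] [Small.{v} R]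
    [Algebra S R] [IsLocalHom (algebraMap S R)] [AddCommGroup M] [Module S M] [Module R M]
    [IsScalarTower S R M] [Module.Finite R M]
    (hS : IsRegularLocal S) (hM : MiracleFlatness.IsCohenMacaulay R M)
    (hdim : ringKrullDim S + Module.supportDim R (M ⧸ ((IsLocalRing.maximalIdeal S).map
      (algebraMap S R) • ⊤ : Submodule R M)) ≤ Module.supportDim R M) :
    Module.Flat S M := by
  obtain ⟨xs, hxs, hlen⟩ := hS.exists_ofList_eq_maximalIdeal
  refine MiracleFlatness.flat_of_lTensor_maximalIdeal_injective R ?_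
  rw [← hxs]
  refine MiracleFlatness.lTensor_ofList_injective_of_isWeaklyRegular ?_
  rw [← RingTheory.Sequence.isWeaklyRegular_map_algebraMap_iff R M xs]
  refine hM.isWeaklyRegular_of_supportDim_add_length_le ?_ ?_
  · refine List.forall_mem_map.mpr fun x hx => map_nonunit (algebraMap S R) x ?_
    exact hxs ▸ Ideal.subset_span hx
  · rwa [← Ideal.map_ofList, hxs, List.length_map, hlen, add_comm]

/-- "Miracle flatness": if `φ : S → R` is a local homomorphism of Noetherian regular
local rings and `dim R = dim S + dim (R/𝔫R)`, then `R` is flat over `S`. -/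
theorem stmt_9 {S R : Type*} [CommRing S] [CommRing R]
    [IsNoetherianRing S] [IsNoetherianRing R] [IsLocalRing S] [IsLocalRing R]
    (φ : S →+* R) (hφ : IsLocalHom φ)
    (hS : IsRegularLocal S) (hR : IsRegularLocal R)
    (hdim : ringKrullDim R =
      ringKrullDim S + ringKrullDim (R ⧸ Ideal.map φ (IsLocalRing.maximalIdeal S))) :
    φ.Flat := by
  algebraize [φ]
  have : IsLocalHom (algebraMap S R) := hφ
  refine stmt_9_general hS hR.isCohenMacaulay ?_
  rw [Ideal.smul_eq_mul, Ideal.mul_top, Module.supportDim_quotient_eq_ringKrullDim,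
    Module.supportDim_self_eq_ringKrullDim]
  exact hdim.ge
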